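/- arXiv:1711.11075 — 5 statements merged into one kernel-verified Lean document; each statement's English description precedes it below -/
import Mathlib

section
/- Let Φ be a real m×n matrix, z ∈ ℝᵐ, and D a real d×n matrix. Let F : ℝᵈ → ℝ and 𝓕 : ℝᵈ → ℝ be functions, let λ > λ' > 0, and let ū, ū' ∈ ℝⁿ. Assume: (i) 𝓕(Dū) = F(Dū) (the majorizer is exact at ū); (ii) 𝓕(w) ≥ F(w) for every w ∈ ℝᵈ; (iii) F(Dū) > 0; and (iv) ū' is a global minimizer of u ↦ λ'·𝓕(Du) + (1/2)‖Φu − z‖₂². Then λ·F(Dū) + (1/2)‖Φū − z‖₂² > λ'·F(Dū') + (1/2)‖Φū' − z‖₂². -/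
open Matrix

/-- Proposition A.1, descent property: if `𝓕` is an exact-at-`ū`
majorizer of `F`, `λ > λ' > 0`, `F(Dū) > 0` and `ū'` minimizes
`u ↦ λ' 𝓕(Du) + (1/2)‖Φu - z‖²`, then
`λ F(Dū) + (1/2)‖Φū - z‖² > λ' F(Dū') + (1/2)‖Φū' - z‖²`. -/
theorem stmt4 {m n d : ℕ} (Φ : Matrix (Fin m) (Fin n) ℝ) (z : Fin m → ℝ)
    (D : Matrix (Fin d) (Fin n) ℝ) (F 𝓕 : (Fin d → ℝ) → ℝ)
    (lam lam' : ℝ) (hlt : lam' < lam) (hpos' : 0 < lam')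
    (ub ub' : Fin n → ℝ)
    (hexact : 𝓕 (D.mulVec ub) = F (D.mulVec ub))
    (hmaj : ∀ w : Fin d → ℝ, F w ≤ 𝓕 w)
    (hFpos : 0 < F (D.mulVec ub))
    (hmin : ∀ u : Fin n → ℝ,
      lam' * 𝓕 (D.mulVec ub') + (1 / 2) * ∑ i, ((Φ.mulVec ub') i - z i) ^ 2 ≤
      lam' * 𝓕 (D.mulVec u) + (1 / 2) * ∑ i, ((Φ.mulVec u) i - z i) ^ 2) :
    lam' * F (D.mulVec ub') + (1 / 2) * ∑ i, ((Φ.mulVec ub') i - z i) ^ 2 <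
    lam * F (D.mulVec ub) + (1 / 2) * ∑ i, ((Φ.mulVec ub) i - z i) ^ 2 := by
  have h1 := hmin ub
  rw [hexact] at h1
  have h2 := mul_le_mul_of_nonneg_left (hmaj (D.mulVec ub')) hpos'.le
  have h3 := mul_lt_mul_of_pos_right hlt hFpos
  linarith
end

section
/- For μ > 0 define ψ_μ(t) = (1/log 2)·log( 2 / (1 + exp(−|t|/μ)) ). Then for every finite family of reals w₁, …, w_d, the sum Σᵢ ψ_μ(wᵢ) converges, as μ → 0⁺, to the number of indices i with wᵢ ≠ 0. -/
/-- The sparsifying scalar function `ψ_μ(t) = (1/log 2) log(2/(1 + exp(-|t|/μ)))`. -/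
noncomputable def psi (μ t : ℝ) : ℝ :=
  (1 / Real.log 2) * Real.log (2 / (1 + Real.exp (-|t| / μ)))

open Classical in
/-- for every finite family `w₁, …, w_d`, `∑ i, ψ_μ(wᵢ)` tends, as
`μ → 0⁺`, to the number of indices with `wᵢ ≠ 0`. -/
theorem stmt6 {d : ℕ} (w : Fin d → ℝ) :
    Filter.Tendsto (fun μ => ∑ i, psi μ (w i)) (nhdsWithin 0 (Set.Ioi 0))
      (nhds ((Finset.univ.filter (fun i => w i ≠ 0)).card : ℝ)) := by
  rw [Finset.card_filter, Nat.cast_sum]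
  apply tendsto_finsetSum
  intro i _
  have h2 : Real.log 2 ≠ 0 := (Real.log_pos (by norm_num)).ne'
  by_cases h : w i = 0
  · simp [psi, h]
    norm_num
  · have hp : 0 < |w i| := abs_pos.mpr h
    have h1 : Filter.Tendsto (fun μ : ℝ => -|w i| / μ) (nhdsWithin 0 (Set.Ioi 0)) Filter.atBot := by
      simp only [div_eq_mul_inv]
      exact tendsto_inv_nhdsGT_zero.const_mul_atTop_of_neg (by linarith)
    have h3 := Real.tendsto_exp_atBot.comp h1
    have h4 : Filter.Tendsto (fun μ : ℝ => 2 / (1 + Real.exp (-|w i| / μ)))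
        (nhdsWithin 0 (Set.Ioi 0)) (nhds (2 / (1 + 0))) :=
      tendsto_const_nhds.div (tendsto_const_nhds.add h3) (by norm_num)
    have h5 := (h4.log (by norm_num)).const_mul (1 / Real.log 2)
    have e : (1 / Real.log 2) * Real.log (2 / (1 + 0)) = 1 := by
      rw [add_zero, div_one]; field_simp
    rw [e] at h5
    simpa [psi, h] using h5
end

section
/- For μ > 0 define ψ_μ(t) = (1/log 2)·log( 2 / (1 + exp(−|t|/μ)) ). Then ψ_μ is concave on the interval [0, ∞). -/
theorem softplus_aux (s t a b : ℝ) (ha : 0 ≤ a) (hb : 0 ≤ b) (hab : a + b = 1) :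
    Real.log (1 + Real.exp (a * s + b * t)) ≤
      a * Real.log (1 + Real.exp s) + b * Real.log (1 + Real.exp t) := by
  have hA : 0 < 1 + Real.exp s := by positivity
  have hB : 0 < 1 + Real.exp t := by positivity
  set A := 1 + Real.exp s with hAd
  set B := 1 + Real.exp t with hBd
  have h1 := convexOn_exp.2 (Set.mem_univ (-Real.log A)) (Set.mem_univ (-Real.log B)) ha hb hab
  have h2 := convexOn_exp.2 (Set.mem_univ (s - Real.log A)) (Set.mem_univ (t - Real.log B))
    ha hb hab
  simp only [smul_eq_mul, Real.exp_neg, Real.exp_sub, Real.exp_log hA, Real.exp_log hB] at h1 h2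
  rw [Real.log_le_iff_le_exp (by positivity)]
  set L := a * Real.log A + b * Real.log B with hL
  have e1 : a * -Real.log A + b * -Real.log B = -L := by rw [hL]; ring
  have e2 : a * (s - Real.log A) + b * (t - Real.log B) = (a * s + b * t) - L := by rw [hL]; ring
  rw [e1, Real.exp_neg] at h1
  rw [e2, Real.exp_sub] at h2
  have e3 : a * A⁻¹ + b * B⁻¹ + (a * (Real.exp s / A) + b * (Real.exp t / B)) = 1 := by
    have hs : Real.exp s = A - 1 := by rw [hAd]; ring
    have ht : Real.exp t = B - 1 := by rw [hBd]; ring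
    rw [hs, ht]
    refine Eq.trans ?_ hab
    field_simp
    ring
  have h3 : (1 + Real.exp (a * s + b * t)) / Real.exp L ≤ 1 := by
    rw [add_div, one_div]; linarith
  rwa [div_le_one (Real.exp_pos L)] at h3

/-- for `μ > 0`, `ψ_μ` is concave on `[0, ∞)`. -/
theorem stmt8 (μ : ℝ) (hμ : 0 < μ) :
    ConcaveOn ℝ (Set.Ici (0 : ℝ)) (psi μ) := by
  refine ⟨convex_Ici 0, ?_⟩
  intro x hx y hy a b ha hb hab
  have hx : 0 ≤ x := hx
  have hy : 0 ≤ y := hy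
  have hxy : 0 ≤ a * x + b * y := by positivity
  simp only [psi, smul_eq_mul, abs_of_nonneg hx, abs_of_nonneg hy, abs_of_nonneg hxy]
  rw [Real.log_div two_ne_zero (by positivity), Real.log_div two_ne_zero (by positivity),
    Real.log_div two_ne_zero (by positivity)]
  have h := softplus_aux (-x / μ) (-y / μ) a b ha hb hab
  have e : a * (-x / μ) + b * (-y / μ) = -(a * x + b * y) / μ := by ring
  rw [e] at h
  have hl : 0 ≤ 1 / Real.log 2 := by have := Real.log_pos one_lt_two; positivity
  have e2 : ∀ c l p q : ℝ, a * (c * (l - p)) + b * (c * (l - q))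
      = c * (l - (a * p + b * q)) := by
    intro c l p q
    linear_combination c * l * hab
  rw [e2]
  exact mul_le_mul_of_nonneg_left (by linarith) hl
end

section
/- For μ > 0 define ψ_μ(t) = (1/log 2)·log( 2 / (1 + exp(−|t|/μ)) ). Then for all s ≥ 0 and t ≥ 0: ψ_μ(s) ≤ ψ_μ(t) + (1 / ( μ · (log 2) · (1 + exp(t/μ)) ))·(s − t); that is, the first-order linearization of ψ_μ at any point t ≥ 0 majorizes ψ_μ on [0, ∞). -/
theorem psi_aux (a b : ℝ) :
    Real.log (2 / (1 + Real.exp (-a))) ≤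
      Real.log (2 / (1 + Real.exp (-b))) + (a - b) / (1 + Real.exp b) := by
  have hB := Real.exp_pos b
  have h1 : 0 < 1 + Real.exp (-a) := by positivity
  have h2 : 0 < 1 + Real.exp (-b) := by positivity
  have h3 : 0 < 1 + Real.exp b := by positivity
  have hc := convexOn_exp.2 (Set.mem_univ (0:ℝ)) (Set.mem_univ (b - a))
    (show 0 ≤ Real.exp b / (1 + Real.exp b) by positivity)
    (show 0 ≤ 1 / (1 + Real.exp b) by positivity) (by field_simp; ring)
  simp only [smul_eq_mul, mul_zero, zero_add, Real.exp_zero, mul_one] at hc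
  have he : Real.exp b / (1 + Real.exp b) + 1 / (1 + Real.exp b) * Real.exp (b - a)
      = (1 + Real.exp (-a)) / (1 + Real.exp (-b)) := by
    rw [sub_eq_add_neg, Real.exp_add, Real.exp_neg b]
    field_simp
    ring
  rw [he] at hc
  have hl := (Real.le_log_iff_exp_le (by positivity)).2 hc
  rw [Real.log_div h1.ne' h2.ne'] at hl
  rw [Real.log_div two_ne_zero h1.ne', Real.log_div two_ne_zero h2.ne']
  have : 1 / (1 + Real.exp b) * (b - a) = -((a - b) / (1 + Real.exp b)) := by ring
  linarith

/-- for `μ > 0` and `s, t ≥ 0`, the first-order linearization of `ψ_μ`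
at `t` majorizes `ψ_μ(s)`:
`ψ_μ(s) ≤ ψ_μ(t) + ψ'_μ(t)(s - t)` with `ψ'_μ(t) = 1/(μ (log 2)(1 + exp(t/μ)))`. -/
theorem stmt11 (μ : ℝ) (hμ : 0 < μ) :
    ∀ s t : ℝ, 0 ≤ s → 0 ≤ t →
      psi μ s ≤ psi μ t + (1 / (μ * Real.log 2 * (1 + Real.exp (t / μ)))) * (s - t) := by
  intro s t hs ht
  have h := psi_aux (s / μ) (t / μ)
  have hL : 0 < Real.log 2 := Real.log_pos one_lt_two
  have h3 : 0 < 1 + Real.exp (t / μ) := by positivity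
  unfold psi
  rw [abs_of_nonneg hs, abs_of_nonneg ht, neg_div, neg_div]
  have h' := mul_le_mul_of_nonneg_left h (one_div_pos.2 hL).le
  refine h'.trans (le_of_eq ?_)
  rw [mul_add]
  congr 1
  field_simp
end

section
/- For μ > 0 define ψ_μ(t) = (1/log 2)·log( 2 / (1 + exp(−|t|/μ)) ) and, for w ∈ ℝᵈ, F_μ(w) = Σᵢ ψ_μ(|wᵢ|). Fix w̄ ∈ ℝᵈ and define the linearized functional 𝓕(w) = F_μ(w̄) + Σᵢ ψ′_μ(|w̄ᵢ|)·(|wᵢ| − |w̄ᵢ|), where ψ′_μ(t) = 1/( μ·(log 2)·(1 + exp(t/μ)) ). Then 𝓕(w̄) = F_μ(w̄) and 𝓕(w) ≥ F_μ(w) for every w ∈ ℝᵈ. -/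
/-- Its derivative on `(0, ∞)`: `ψ'_μ(t) = 1/(μ (log 2)(1 + exp(t/μ)))`. -/
noncomputable def psi' (μ t : ℝ) : ℝ :=
  1 / (μ * Real.log 2 * (1 + Real.exp (t / μ)))

/-- `F_μ(w) = ∑ i, ψ_μ(|wᵢ|)`. -/
noncomputable def Fmu {d : ℕ} (μ : ℝ) (w : Fin d → ℝ) : ℝ :=
  ∑ i, psi μ |w i|

theorem aux_log (x y : ℝ) :
    Real.log (2 / (1 + Real.exp (-x))) ≤
      Real.log (2 / (1 + Real.exp (-y))) + 1 / (1 + Real.exp y) * (x - y) := by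
  have hx := Real.exp_pos (-x)
  have hy := Real.exp_pos (-y)
  have hY := Real.exp_pos y
  rw [Real.log_div (by norm_num) (by positivity), Real.log_div (by norm_num) (by positivity)]
  set p : ℝ := 1 / (1 + Real.exp y) with hp
  have hp0 : 0 ≤ p := by positivity
  have hp1 : 0 ≤ 1 - p := by
    have : p ≤ 1 := by
      rw [hp, div_le_one (by positivity)]; linarith
    linarith
  have hc := convexOn_exp.2 (Set.mem_univ (0 : ℝ)) (Set.mem_univ (y - x)) hp1 hp0 (by ring)
  simp only [smul_eq_mul, mul_zero, zero_add, Real.exp_zero, mul_one] at hc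
  have he : 1 - p + p * Real.exp (y - x) = (1 + Real.exp (-x)) / (1 + Real.exp (-y)) := by
    rw [hp, Real.exp_sub, Real.exp_neg, Real.exp_neg]
    have := Real.exp_pos x
    field_simp
    ring
  rw [he] at hc
  have hl := (Real.le_log_iff_exp_le (by positivity)).2 hc
  rw [Real.log_div (by positivity) (by positivity)] at hl
  linarith

theorem aux_psi (μ : ℝ) (hμ : 0 < μ) (a b : ℝ) :
    psi μ |a| ≤ psi μ |b| + psi' μ |b| * (|a| - |b|) := by
  have hlog : 0 < Real.log 2 := Real.log_pos (by norm_num)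
  have h := mul_le_mul_of_nonneg_left (aux_log (|a| / μ) (|b| / μ)) (one_div_pos.2 hlog).le
  unfold psi psi'
  simp only [abs_abs, neg_div]
  refine h.trans (le_of_eq ?_)
  have hE := Real.exp_pos (|b| / μ)
  rw [mul_add]
  congr 1
  field_simp

/-- the linearization `𝓕(w) = F_μ(w̄) + ∑ i ψ'_μ(|w̄ᵢ|)(|wᵢ| - |w̄ᵢ|)`
of `F_μ` at `w̄` coincides with `F_μ` at `w̄` and majorizes `F_μ` everywhere. -/
theorem stmt12 {d : ℕ} (μ : ℝ) (hμ : 0 < μ) (wbar : Fin d → ℝ) :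
    (Fmu μ wbar + ∑ i, psi' μ |wbar i| * (|wbar i| - |wbar i|) = Fmu μ wbar) ∧
    (∀ w : Fin d → ℝ,
      Fmu μ w ≤ Fmu μ wbar + ∑ i, psi' μ |wbar i| * (|w i| - |wbar i|)) := by
  refine ⟨by simp, fun w => ?_⟩
  unfold Fmu
  rw [← Finset.sum_add_distrib]
  exact Finset.sum_le_sum fun i _ => aux_psi μ hμ (w i) (wbar i)
end
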